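/- If Γ ⊢ s∘q ▷ Δ is derivable and both s and q have one of the four shapes (i) id, (ii) an iterated composition (…((π_{a₁}∘π_{a₂})∘…)∘π_{a_n}) with n ≥ 1, (iii) ⟨id, N₁\b₁, …, N_k\b_k⟩ with k ≥ 1, or (iv) ⟨(…((π_{a₁}∘π_{a₂})∘…)∘π_{a_n}), N₁\b₁, …, N_k\b_k⟩ with n,k ≥ 1, then s∘q σπα-reduces (in zero or more steps of the one-step σπα-reduction on substitutions) to a substitution of one of the shapes (i)–(iv). -/

import Mathlib

/- Named terms and substitutions of the λπ-calculus. Variables are natural numbers. -/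
mutual
inductive Tm : Type
  | var : ℕ → Tm
  | app : Tm → Tm → Tm
  | lam : ℕ → Tm → Tm
  | clos : Subst → Tm → Tm
inductive Subst : Type
  | id : Subst
  | pi : ℕ → Subst
  | cons : Subst → Tm → ℕ → Subst
  | comp : Subst → Subst → Subst
end

/- Contexts are lists of variables; the head of the list is the *rightmost* variable,
so the context `Γ, a` of the paper is `a :: Γ`. -/
mutual
/-- `WfTm Γ M` is the judgement `Γ ⊢ M`. -/
inductive WfTm : List ℕ → Tm → Prop
  | var (Γ : List ℕ) (a : ℕ) : WfTm (a :: Γ) (.var a)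
  | weak {Γ : List ℕ} {a : ℕ} (b : ℕ) : a ≠ b → WfTm Γ (.var a) → WfTm (b :: Γ) (.var a)
  | app {Γ M N} : WfTm Γ M → WfTm Γ N → WfTm Γ (.app M N)
  | lam {Γ a M} : WfTm (a :: Γ) M → WfTm Γ (.lam a M)
  | clos {Γ s Δ M} : WfSub Γ s Δ → WfTm Δ M → WfTm Γ (.clos s M)
/-- `WfSub Γ s Δ` is the judgement `Γ ⊢ s ▷ Δ`. -/
inductive WfSub : List ℕ → Subst → List ℕ → Prop
  | id (Γ) : WfSub Γ .id Γ
  | pi (Γ a) : WfSub (a :: Γ) (.pi a) Γ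
  | cons {Γ s Δ N} (a) : WfSub Γ s Δ → WfTm Γ N → WfSub Γ (.cons s N a) (a :: Δ)
  | comp {Γ s Δ q Θ} : WfSub Γ s Δ → WfSub Δ q Θ → WfSub Γ (.comp s q) Θ
end

/-- The operator `O_{λa}` on sequences of finite sets (sequences are 0-indexed:
index `n` corresponds to the paper's index `n+1`). -/
def Olam (a : ℕ) (A : ℕ → Finset ℕ) : ℕ → Finset ℕ
  | 0 => (A 0).erase a ∪ A 1
  | n + 1 => A (n + 2)

/-- The operator `O_π`. -/
def Opi (A : ℕ → Finset ℕ) : ℕ → Finset ℕ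
  | 0 => ∅
  | n + 1 => A n

mutual
/-- The free-variable sequence of a term: `FV M n` is the paper's `FV_{n+1}(M)`. -/
def FV : Tm → ℕ → Finset ℕ
  | .var a => fun n => if n = 0 then {a} else ∅
  | .app M N => fun n => FV M n ∪ FV N n
  | .lam a M => Olam a (FV M)
  | .clos s M => Osub s (FV M)
/-- The operator `O_s` associated with a substitution `s`. -/
def Osub : Subst → (ℕ → Finset ℕ) → (ℕ → Finset ℕ)
  | .id => fun A => A
  | .pi _ => fun A => Opi A
  | .cons s N a => fun A n => Osub s (Olam a A) n ∪ FV N n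
  | .comp s q => fun A => Osub s (Osub q A)
end

/-- Iterated abstraction `λΓ.M` (recall the head of the list is the rightmost variable). -/
def lamCtx : List ℕ → Tm → Tm
  | [], M => M
  | a :: Γ, M => lamCtx Γ (.lam a M)

/-- Free variables of a judgement: `FV(Γ ⊢ M) = FV(λΓ.M)`. -/
def FVJ (Γ : List ℕ) (M : Tm) : ℕ → Finset ℕ := FV (lamCtx Γ M)

/-- Iterated lifting `⇑_Δ(s)`. -/
def Uparrow : List ℕ → Subst → Subst
  | [], s => s
  | a :: Δ, s => .cons (.comp (.pi a) (Uparrow Δ s)) (.var a) a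

/- One-step reduction of the λπ-calculus (compatible closure).  The Boolean
parameter tells whether the rule `Beta` is allowed: `StepTm true` is λπ-reduction,
`StepTm false` is σπα-reduction. -/
mutual
inductive StepTm : Bool → Tm → Tm → Prop
  | beta {a : ℕ} {M N : Tm} :
      StepTm true (.app (.lam a M) N) (.clos (.cons .id N a) M)
  | abs {β : Bool} {s : Subst} {a : ℕ} {M : Tm} :
      StepTm β (.clos s (.lam a M))
        (.lam a (.clos (.cons (.comp (.pi a) s) (.var a) a) M))
  | app {β : Bool} {s : Subst} {M N : Tm} :
      StepTm β (.clos s (.app M N)) (.app (.clos s M) (.clos s N))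
  | consVar {β : Bool} {s : Subst} {N : Tm} {a : ℕ} :
      StepTm β (.clos (.cons s N a) (.var a)) N
  | new {β : Bool} {s : Subst} {N : Tm} {a b : ℕ} : a ≠ b →
      StepTm β (.clos (.cons s N a) (.var b)) (.clos s (.var b))
  | idVar {β : Bool} {a : ℕ} : StepTm β (.clos .id (.var a)) (.var a)
  | clos {β : Bool} {s q : Subst} {M : Tm} :
      StepTm β (.clos s (.clos q M)) (.clos (.comp s q) M)
  | pi1 {β : Bool} {a b : ℕ} : a ≠ b → StepTm β (.clos (.pi a) (.var b)) (.var b)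
  | pi2 {β : Bool} {s : Subst} {a b : ℕ} : a ≠ b →
      StepTm β (.clos (.comp s (.pi a)) (.var b)) (.clos s (.var b))
  | alpha1 {β : Bool} {a b : ℕ} {M : Tm} :
      (∃ i, a ∈ FV (.lam a M) i) → (∀ i, b ∉ FV (.lam a M) i) →
      StepTm β (.lam a M) (.lam b (.clos (.cons (.pi b) (.var b) a) M))
  | lamCong {β : Bool} {a : ℕ} {M₁ M₂ : Tm} :
      StepTm β M₁ M₂ → StepTm β (.lam a M₁) (.lam a M₂)
  | appL {β : Bool} {M₁ M₂ N : Tm} : StepTm β M₁ M₂ → StepTm β (.app M₁ N) (.app M₂ N)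
  | appR {β : Bool} {M N₁ N₂ : Tm} : StepTm β N₁ N₂ → StepTm β (.app M N₁) (.app M N₂)
  | closL {β : Bool} {s₁ s₂ : Subst} {M : Tm} :
      StepSub β s₁ s₂ → StepTm β (.clos s₁ M) (.clos s₂ M)
  | closR {β : Bool} {s : Subst} {M₁ M₂ : Tm} :
      StepTm β M₁ M₂ → StepTm β (.clos s M₁) (.clos s M₂)
inductive StepSub : Bool → Subst → Subst → Prop
  | ass {β : Bool} {s q r : Subst} :
      StepSub β (.comp s (.comp q r)) (.comp (.comp s q) r)
  | idR {β : Bool} {s : Subst} : StepSub β (.comp s .id) s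
  | idShift {β : Bool} {a : ℕ} : StepSub β (.comp .id (.pi a)) (.pi a)
  | consShift {β : Bool} {s : Subst} {N : Tm} {a : ℕ} :
      StepSub β (.comp (.cons s N a) (.pi a)) s
  | map {β : Bool} {s q : Subst} {N : Tm} {a : ℕ} :
      StepSub β (.comp s (.cons q N a)) (.cons (.comp s q) (.clos s N) a)
  | consL {β : Bool} {s₁ s₂ : Subst} {N : Tm} {a : ℕ} :
      StepSub β s₁ s₂ → StepSub β (.cons s₁ N a) (.cons s₂ N a)
  | consR {β : Bool} {s : Subst} {N₁ N₂ : Tm} {a : ℕ} :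
      StepTm β N₁ N₂ → StepSub β (.cons s N₁ a) (.cons s N₂ a)
  | compL {β : Bool} {s₁ s₂ q : Subst} :
      StepSub β s₁ s₂ → StepSub β (.comp s₁ q) (.comp s₂ q)
  | compR {β : Bool} {s q₁ q₂ : Subst} :
      StepSub β q₁ q₂ → StepSub β (.comp s q₁) (.comp s q₂)
end

/-- One-step reduction `⇝` on judgements `Γ ⊢ M`, including the rule `α₂`.
`StepJ true` is λπ, `StepJ false` is σπα. -/
inductive StepJ (β : Bool) : List ℕ × Tm → List ℕ × Tm → Prop
  | step {Γ : List ℕ} {M₁ M₂ : Tm} : StepTm β M₁ M₂ → StepJ β (Γ, M₁) (Γ, M₂)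
  | alpha2 {Γ Δ : List ℕ} {a b : ℕ} {M : Tm} :
      (∃ i, a ∈ FVJ (Δ ++ [a]) M i) → (∀ i, b ∉ FVJ (Δ ++ [a]) M i) →
      StepJ β (Δ ++ a :: Γ, M)
        (Δ ++ b :: Γ, .clos (Uparrow Δ (.cons (.pi b) (.var b) a)) M)

/- Name-free (de Bruijn) terms and substitutions. -/
mutual
inductive NTm : Type
  | one : NTm
  | app : NTm → NTm → NTm
  | lam : NTm → NTm
  | clos : NSub → NTm → NTm
inductive NSub : Type
  | id : NSub
  | pi : NSub
  | cons : NSub → NTm → NSub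
  | comp : NSub → NSub → NSub
end

/-- `piIter n` is the left-nested composition of `n+1` copies of `π`. -/
def piIter : ℕ → NSub
  | 0 => .pi
  | k + 1 => .comp (piIter k) .pi

/-- `dbr n` is the de Bruijn index `n+1̲`: `dbr 0 = 1` and
`dbr (n+1) = ((…(π∘π)∘…)∘π)∘1` with `n+1` occurrences of `π`. -/
def dbr : ℕ → NTm
  | 0 => .one
  | n + 1 => .clos (piIter n) .one

/- One-step reduction of λσ (`NStepTm true`) resp. σ (`NStepTm false`)
on name-free terms/substitutions. -/
mutual
inductive NStepTm : Bool → NTm → NTm → Prop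
  | beta {U V : NTm} : NStepTm true (.app (.lam U) V) (.clos (.cons .id V) U)
  | abs {β : Bool} {u : NSub} {U : NTm} :
      NStepTm β (.clos u (.lam U)) (.lam (.clos (.cons (.comp .pi u) .one) U))
  | app {β : Bool} {u : NSub} {U V : NTm} :
      NStepTm β (.clos u (.app U V)) (.app (.clos u U) (.clos u V))
  | consVar {β : Bool} {u : NSub} {V : NTm} : NStepTm β (.clos (.cons u V) .one) V
  | idVar {β : Bool} : NStepTm β (.clos .id .one) .one
  | clos {β : Bool} {u v : NSub} {U : NTm} :
      NStepTm β (.clos u (.clos v U)) (.clos (.comp u v) U)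
  | lamCong {β : Bool} {U₁ U₂ : NTm} : NStepTm β U₁ U₂ → NStepTm β (.lam U₁) (.lam U₂)
  | appL {β : Bool} {U₁ U₂ V : NTm} : NStepTm β U₁ U₂ → NStepTm β (.app U₁ V) (.app U₂ V)
  | appR {β : Bool} {U V₁ V₂ : NTm} : NStepTm β V₁ V₂ → NStepTm β (.app U V₁) (.app U V₂)
  | closL {β : Bool} {u₁ u₂ : NSub} {U : NTm} :
      NStepSub β u₁ u₂ → NStepTm β (.clos u₁ U) (.clos u₂ U)
  | closR {β : Bool} {u : NSub} {U₁ U₂ : NTm} :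
      NStepTm β U₁ U₂ → NStepTm β (.clos u U₁) (.clos u U₂)
inductive NStepSub : Bool → NSub → NSub → Prop
  | ass {β : Bool} {u v w : NSub} : NStepSub β (.comp u (.comp v w)) (.comp (.comp u v) w)
  | idR {β : Bool} {u : NSub} : NStepSub β (.comp u .id) u
  | idShift {β : Bool} : NStepSub β (.comp .id .pi) .pi
  | consShift {β : Bool} {u : NSub} {V : NTm} : NStepSub β (.comp (.cons u V) .pi) u
  | map {β : Bool} {u v : NSub} {V : NTm} :
      NStepSub β (.comp u (.cons v V)) (.cons (.comp u v) (.clos u V))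
  | consL {β : Bool} {u₁ u₂ : NSub} {V : NTm} :
      NStepSub β u₁ u₂ → NStepSub β (.cons u₁ V) (.cons u₂ V)
  | consR {β : Bool} {u : NSub} {V₁ V₂ : NTm} :
      NStepTm β V₁ V₂ → NStepSub β (.cons u V₁) (.cons u V₂)
  | compL {β : Bool} {u₁ u₂ v : NSub} :
      NStepSub β u₁ u₂ → NStepSub β (.comp u₁ v) (.comp u₂ v)
  | compR {β : Bool} {u v₁ v₂ : NSub} :
      NStepSub β v₁ v₂ → NStepSub β (.comp u v₁) (.comp u v₂)
end

/- The correspondence `(Γ ⊢ M) ⟹ U` resp. `(Γ ⊢ s ▷ Δ) ⟹ u` between judgements and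
name-free terms/substitutions (Definition 7.6 of the paper). -/
mutual
inductive TrTm : List ℕ → Tm → NTm → Prop
  | var (Γ : List ℕ) (a : ℕ) : TrTm (a :: Γ) (.var a) (dbr 0)
  | weak {Γ : List ℕ} {a : ℕ} {n : ℕ} (b : ℕ) : a ≠ b →
      TrTm Γ (.var a) (dbr n) → TrTm (b :: Γ) (.var a) (dbr (n + 1))
  | app {Γ M N U V} : TrTm Γ M U → TrTm Γ N V → TrTm Γ (.app M N) (.app U V)
  | lam {Γ a M U} : TrTm (a :: Γ) M U → TrTm Γ (.lam a M) (.lam U)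
  | clos {Γ s Δ M u U} : TrSub Γ s Δ u → TrTm Δ M U → TrTm Γ (.clos s M) (.clos u U)
inductive TrSub : List ℕ → Subst → List ℕ → NSub → Prop
  | id (Γ) : TrSub Γ .id Γ .id
  | pi (Γ a) : TrSub (a :: Γ) (.pi a) Γ .pi
  | cons {Γ s Δ N u V} (a) : TrSub Γ s Δ u → TrTm Γ N V →
      TrSub Γ (.cons s N a) (a :: Δ) (.cons u V)
  | comp {Γ s Δ q Θ u v} : TrSub Γ s Δ u → TrSub Δ q Θ v →
      TrSub Γ (.comp s q) Θ (.comp u v)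
end

/-- Left-nested compositions `(…((π_{a₁}∘π_{a₂})∘…)∘π_{a_n}` with `n ≥ 1`. -/
inductive IsPiComp : Subst → Prop
  | single (a : ℕ) : IsPiComp (.pi a)
  | comp {s : Subst} (a : ℕ) : IsPiComp s → IsPiComp (.comp s (.pi a))

/-- Substitutions of the form `⟨r, N₁\b₁, …, N_k\b_k⟩` with `k ≥ 1`, where `r` is `id`
or a left-nested composition of `π`'s. -/
inductive IsConsChain : Subst → Prop
  | base {s : Subst} {N : Tm} {b : ℕ} : (s = Subst.id ∨ IsPiComp s) →
      IsConsChain (.cons s N b)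
  | cons {s : Subst} {N : Tm} {b : ℕ} : IsConsChain s → IsConsChain (.cons s N b)

/-- The four shapes (i)–(iv) of σπα-normal substitutions. -/
def NFShape (s : Subst) : Prop := s = Subst.id ∨ IsPiComp s ∨ IsConsChain s

/-- A term is pure iff it contains no subterm of the shape `s∘N`. -/
def PureTm : Tm → Prop
  | .var _ => True
  | .app M N => PureTm M ∧ PureTm N
  | .lam _ M => PureTm M
  | .clos _ _ => False

/-- `PiChainEnd s b`: `s` is a left-nested composition of `π`'s whose rightmost factor
is `π_b`, i.e. `s = ((…(π_{a₁}∘…)∘π_{a_m})∘π_b` with `m ≥ 0`. -/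
inductive PiChainEnd : Subst → ℕ → Prop
  | single (b : ℕ) : PiChainEnd (.pi b) b
  | comp {s : Subst} (b : ℕ) : IsPiComp s → PiChainEnd (.comp s (.pi b)) b

/-- Terms constructed from variables and blocks `((…((π_{a₁}∘π_{a₂})∘…)∘π_b)∘b`
(with `m ≥ 0` factors before `π_b`) using application and abstraction only. -/
inductive FromBlocks : Tm → Prop
  | var (a : ℕ) : FromBlocks (.var a)
  | block {s : Subst} {b : ℕ} : PiChainEnd s b → FromBlocks (.clos s (.var b))
  | app {M N : Tm} : FromBlocks M → FromBlocks N → FromBlocks (.app M N)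
  | lam {M : Tm} (a : ℕ) : FromBlocks M → FromBlocks (.lam a M)

/- The compatible closure of the single rule α₁ on terms and substitutions. -/
mutual
inductive A1Tm : Tm → Tm → Prop
  | alpha1 {a b : ℕ} {M : Tm} :
      (∃ i, a ∈ FV (.lam a M) i) → (∀ i, b ∉ FV (.lam a M) i) →
      A1Tm (.lam a M) (.lam b (.clos (.cons (.pi b) (.var b) a) M))
  | lamCong {a : ℕ} {M₁ M₂ : Tm} : A1Tm M₁ M₂ → A1Tm (.lam a M₁) (.lam a M₂)
  | appL {M₁ M₂ N : Tm} : A1Tm M₁ M₂ → A1Tm (.app M₁ N) (.app M₂ N)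
  | appR {M N₁ N₂ : Tm} : A1Tm N₁ N₂ → A1Tm (.app M N₁) (.app M N₂)
  | closL {s₁ s₂ : Subst} {M : Tm} : A1Sub s₁ s₂ → A1Tm (.clos s₁ M) (.clos s₂ M)
  | closR {s : Subst} {M₁ M₂ : Tm} : A1Tm M₁ M₂ → A1Tm (.clos s M₁) (.clos s M₂)
inductive A1Sub : Subst → Subst → Prop
  | consL {s₁ s₂ : Subst} {N : Tm} {a : ℕ} : A1Sub s₁ s₂ → A1Sub (.cons s₁ N a) (.cons s₂ N a)
  | consR {s : Subst} {N₁ N₂ : Tm} {a : ℕ} : A1Tm N₁ N₂ → A1Sub (.cons s N₁ a) (.cons s N₂ a)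
  | compL {s₁ s₂ q : Subst} : A1Sub s₁ s₂ → A1Sub (.comp s₁ q) (.comp s₂ q)
  | compR {s q₁ q₂ : Subst} : A1Sub q₁ q₂ → A1Sub (.comp s q₁) (.comp s q₂)
end


theorem NFShape.cons' {s : Subst} {N : Tm} {b : ℕ} (h : NFShape s) : NFShape (.cons s N b) := by
  rcases h with h | h | h
  · exact Or.inr (Or.inr (.base (Or.inl h)))
  · exact Or.inr (Or.inr (.base (Or.inr h)))
  · exact Or.inr (Or.inr (.cons h))

theorem comp_pi_aux {Γ Δ : List ℕ} {s : Subst} {a : ℕ}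
    (h : WfSub Γ s (a :: Δ)) (hs : NFShape s) :
    ∃ r : Subst, Relation.ReflTransGen (StepSub false) (.comp s (.pi a)) r ∧ NFShape r ∧
      WfSub Γ r Δ := by
  rcases hs with rfl | hs | hs
  · cases h
    exact ⟨_, .single .idShift, Or.inr (Or.inl (.single a)), .pi _ _⟩
  · exact ⟨_, .refl, Or.inr (Or.inl (.comp a hs)), .comp h (.pi _ _)⟩
  · cases hs with
    | base hb =>
      cases h with
      | cons _ h1 h2 =>
        refine ⟨_, .single .consShift, ?_, h1⟩
        rcases hb with hb | hb
        · exact Or.inl hb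
        · exact Or.inr (Or.inl hb)
    | cons hb =>
      cases h with
      | cons _ h1 h2 => exact ⟨_, .single .consShift, Or.inr (Or.inr hb), h1⟩

theorem comp_piComp_aux {Γ : List ℕ} {s q : Subst} (hs : NFShape s) (hq : IsPiComp q) :
    ∀ {Δ Θ : List ℕ}, WfSub Γ s Δ → WfSub Δ q Θ →
    ∃ r : Subst, Relation.ReflTransGen (StepSub false) (.comp s q) r ∧ NFShape r ∧
      WfSub Γ r Θ := by
  induction hq with
  | single a =>
    intro Δ Θ h1 h2
    cases h2
    exact comp_pi_aux h1 hs
  | comp a hq ih =>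
    intro Δ Θ h1 h2
    cases h2 with
    | comp h3 h4 =>
      cases h4
      obtain ⟨r, hr, hn, hw⟩ := ih h1 h3
      obtain ⟨r', hr', hn', hw'⟩ := comp_pi_aux hw hn
      refine ⟨r', ?_, hn', hw'⟩
      refine Relation.ReflTransGen.head .ass (Relation.ReflTransGen.trans ?_ hr')
      exact Relation.ReflTransGen.lift (fun x => Subst.comp x (.pi a)) (fun _ _ h => StepSub.compL h) _ _ hr

theorem comp_cons_step {s q r : Subst} {N : Tm} {b : ℕ}
    (hr : Relation.ReflTransGen (StepSub false) (.comp s q) r) :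
    Relation.ReflTransGen (StepSub false) (.comp s (.cons q N b)) (.cons r (.clos s N) b) :=
  Relation.ReflTransGen.head .map
    (Relation.ReflTransGen.lift (fun x => Subst.cons x (.clos s N) b) (fun _ _ h => StepSub.consL h) _ _ hr)

theorem comp_cons_aux {Γ Δ : List ℕ} {s q : Subst} (hs : NFShape s) (h1 : WfSub Γ s Δ)
    (hq : IsConsChain q) : ∀ {Θ : List ℕ}, WfSub Δ q Θ →
    ∃ r : Subst, Relation.ReflTransGen (StepSub false) (.comp s q) r ∧ NFShape r := by
  induction hq with
  | base hb =>
    intro Θ h2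
    cases h2 with
    | cons _ h3 h4 =>
      rcases hb with rfl | hb
      · exact ⟨_, comp_cons_step (.single .idR), hs.cons'⟩
      · obtain ⟨r, hr, hn, -⟩ := comp_piComp_aux hs hb h1 h3
        exact ⟨_, comp_cons_step hr, hn.cons'⟩
  | cons hb ih =>
    intro Θ h2
    cases h2 with
    | cons _ h3 h4 =>
      obtain ⟨r, hr, hn⟩ := ih h3
      exact ⟨_, comp_cons_step hr, hn.cons'⟩

/-- the composition of two substitutions of the shapes (i)–(iv)
σπα-reduces to a substitution of one of the shapes (i)–(iv). -/
theorem comp_of_shapes_reduces {Γ Δ : List ℕ} {s q : Subst}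
    (h : WfSub Γ (.comp s q) Δ) (hs : NFShape s) (hq : NFShape q) :
    ∃ r : Subst, Relation.ReflTransGen (StepSub false) (.comp s q) r ∧ NFShape r := by
  cases h with
  | comp h1 h2 =>
    rcases hq with rfl | hq | hq
    · exact ⟨s, .single .idR, hs⟩
    · obtain ⟨r, hr, hn, -⟩ := comp_piComp_aux hs hq h1 h2
      exact ⟨r, hr, hn⟩
    · exact comp_cons_aux hs h1 hq h2
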